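/- For 1 < i < N, I ∈ S_i and any weight λ: e_i (f_I H_I + f_{I⁺} H_{I⁺} + f_{I⁻} H_{I⁻}) v_λ = 0 in M(λ). -/

import Mathlib

noncomputable section

open FreeAlgebra

/-- `𝕜 = F(q)`, the field of rational functions over `F`. -/
abbrev kk (F : Type) [Field F] : Type := RatFunc F

/-- The variable `q`. -/
def qq (F : Type) [Field F] : kk F := RatFunc.X

/-- `v = q²`. -/
def vv (F : Type) [Field F] : kk F := qq F ^ 2

/-- The balanced quantum integer `[n]_v`. -/
def qint (F : Type) [Field F] (n : ℤ) : kk F :=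
  (vv F ^ n - vv F ^ (-n)) / (vv F - (vv F)⁻¹)

/-- The quantum factorial `[m]_v!`. -/
def qfact (F : Type) [Field F] (m : ℕ) : kk F :=
  ∏ j ∈ Finset.Icc 1 m, qint F j

/-- The balanced Gaussian binomial coefficient `C(n,i)_v`. -/
def qbinom (F : Type) [Field F] (n i : ℕ) : kk F :=
  qfact F n / (qfact F i * qfact F (n - i))

/-- The Cartan matrix of `sl(N+1)`, with 1-based indices. -/
def cartan (i j : ℕ) : ℤ :=
  if i = j then 2 else if i + 1 = j ∨ j + 1 = i then -1 else 0

/-- Generators of `U_q(sl(N+1))`: `e i`, `f i`, `k i`, `kinv i` (0-based `i : Fin N`,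
corresponding to the 1-based index `i+1`). -/
inductive Gen (N : ℕ) : Type
  | e : Fin N → Gen N
  | f : Fin N → Gen N
  | k : Fin N → Gen N
  | kinv : Fin N → Gen N

/-- The defining relations of `U_q(sl(N+1))`. -/
inductive UqRel (F : Type) [Field F] (N : ℕ) :
    FreeAlgebra (kk F) (Gen N) → FreeAlgebra (kk F) (Gen N) → Prop
  | kkinv (i : Fin N) : UqRel F N (ι (kk F) (Gen.k i) * ι (kk F) (Gen.kinv i)) 1
  | kinvk (i : Fin N) : UqRel F N (ι (kk F) (Gen.kinv i) * ι (kk F) (Gen.k i)) 1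
  | kcomm (i j : Fin N) :
      UqRel F N (ι (kk F) (Gen.k i) * ι (kk F) (Gen.k j))
        (ι (kk F) (Gen.k j) * ι (kk F) (Gen.k i))
  | ke (i j : Fin N) :
      UqRel F N (ι (kk F) (Gen.k i) * ι (kk F) (Gen.e j) * ι (kk F) (Gen.kinv i))
        ((qq F ^ cartan ((i : ℕ) + 1) ((j : ℕ) + 1)) • ι (kk F) (Gen.e j))
  | kf (i j : Fin N) :
      UqRel F N (ι (kk F) (Gen.k i) * ι (kk F) (Gen.f j) * ι (kk F) (Gen.kinv i))
        ((qq F ^ (-cartan ((i : ℕ) + 1) ((j : ℕ) + 1))) • ι (kk F) (Gen.f j))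
  | ef (i j : Fin N) :
      UqRel F N (ι (kk F) (Gen.e i) * ι (kk F) (Gen.f j) - ι (kk F) (Gen.f j) * ι (kk F) (Gen.e i))
        (if i = j then
          ((qq F ^ 2 - qq F ^ (-2 : ℤ))⁻¹) •
            ((ι (kk F) (Gen.k i)) ^ 2 - (ι (kk F) (Gen.kinv i)) ^ 2)
        else 0)
  | serre_e_near (i j : Fin N) (h : (i : ℕ) + 1 = j ∨ (j : ℕ) + 1 = i) :
      UqRel F N
        ((ι (kk F) (Gen.e i)) ^ 2 * ι (kk F) (Gen.e j)
          - (qq F ^ 2 + qq F ^ (-2 : ℤ)) •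
              (ι (kk F) (Gen.e i) * ι (kk F) (Gen.e j) * ι (kk F) (Gen.e i))
          + ι (kk F) (Gen.e j) * (ι (kk F) (Gen.e i)) ^ 2) 0
  | serre_f_near (i j : Fin N) (h : (i : ℕ) + 1 = j ∨ (j : ℕ) + 1 = i) :
      UqRel F N
        ((ι (kk F) (Gen.f i)) ^ 2 * ι (kk F) (Gen.f j)
          - (qq F ^ 2 + qq F ^ (-2 : ℤ)) •
              (ι (kk F) (Gen.f i) * ι (kk F) (Gen.f j) * ι (kk F) (Gen.f i))
          + ι (kk F) (Gen.f j) * (ι (kk F) (Gen.f i)) ^ 2) 0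
  | serre_e_far (i j : Fin N) (h : (i : ℕ) + 1 < j ∨ (j : ℕ) + 1 < i) :
      UqRel F N (ι (kk F) (Gen.e i) * ι (kk F) (Gen.e j))
        (ι (kk F) (Gen.e j) * ι (kk F) (Gen.e i))
  | serre_f_far (i j : Fin N) (h : (i : ℕ) + 1 < j ∨ (j : ℕ) + 1 < i) :
      UqRel F N (ι (kk F) (Gen.f i) * ι (kk F) (Gen.f j))
        (ι (kk F) (Gen.f j) * ι (kk F) (Gen.f i))

/-- The quantized enveloping algebra `U = U_q(sl(N+1))`. -/
abbrev Uq (F : Type) [Field F] (N : ℕ) : Type := RingQuot (UqRel F N)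

variable (F : Type) [Field F] (N : ℕ)

/-- The image of a generator in `U`. -/
def gen (g : Gen N) : Uq F N := RingQuot.mkAlgHom (kk F) (UqRel F N) (ι (kk F) g)

/-- `e_i` (1-based index `1 ≤ i ≤ N`; junk value `0` outside this range). -/
def egen (i : ℕ) : Uq F N :=
  if h : 1 ≤ i ∧ i ≤ N then gen F N (Gen.e ⟨i - 1, by omega⟩) else 0

/-- `f_i` (1-based index). -/
def fgen (i : ℕ) : Uq F N :=
  if h : 1 ≤ i ∧ i ≤ N then gen F N (Gen.f ⟨i - 1, by omega⟩) else 0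

/-- `k_i` (1-based index). -/
def kgen (i : ℕ) : Uq F N :=
  if h : 1 ≤ i ∧ i ≤ N then gen F N (Gen.k ⟨i - 1, by omega⟩) else 0

/-- `k_i⁻¹` (1-based index). -/
def kinvgen (i : ℕ) : Uq F N :=
  if h : 1 ≤ i ∧ i ≤ N then gen F N (Gen.kinv ⟨i - 1, by omega⟩) else 0

/-- Auxiliary recursion: `fword i d = f_{i, i+1+d}`. -/
def fword (i : ℕ) : ℕ → Uq F N
  | 0 => fgen F N i
  | d + 1 =>
      qq F • (fword i d * fgen F N (i + 1 + d)) -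
        (qq F)⁻¹ • (fgen F N (i + 1 + d) * fword i d)

/-- The quantum root vector `f_{i,j}` (for `1 ≤ i < j ≤ N+1`). -/
def fij (i j : ℕ) : Uq F N := fword F N i (j - i - 1)

/-- Product of `f_{a,b}` over successive entries of a list. -/
def fList : List ℕ → Uq F N
  | a :: b :: rest => fij F N a b * fList (b :: rest)
  | _ => 1

/-- `f_S` for a finite set `S` of indices. -/
def fSet (S : Finset ℕ) : Uq F N := fList F N (S.sort (· ≤ ·))

/-- The index set `𝕀` of subsets of `{1,…,N+1}` containing `1` and `N+1`. -/
def II : Finset (Finset ℕ) :=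
  (Finset.Icc 1 (N + 1)).powerset.filter fun I => 1 ∈ I ∧ N + 1 ∈ I

/-- `r(I) = {s - 1 : s ∈ {1,…,N+1} \ I}`. -/
def rSet (I : Finset ℕ) : Finset ℕ := (Finset.Icc 1 (N + 1) \ I).image (· - 1)

/-- `k_{σ_i} = k_1 ⋯ k_i`. -/
def kσ (i : ℕ) : Uq F N := ((List.range i).map fun j => kgen F N (j + 1)).prod

/-- `K_{σ_i} = k_{σ_i}²`. -/
def Kσ (i : ℕ) : Uq F N := kσ F N i ^ 2

/-- `k_{σ_i}⁻¹ = k_1⁻¹ ⋯ k_i⁻¹`. -/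
def kσinv (i : ℕ) : Uq F N := ((List.range i).map fun j => kinvgen F N (j + 1)).prod

/-- `K_{σ_i}⁻¹`. -/
def KσInv (i : ℕ) : Uq F N := kσinv F N i ^ 2

/-- The element `h_i = -q⁻¹ v^{-(i-1)} K_{σ_i}⁻¹ (K_{σ_i} v^i - K_{σ_i}⁻¹ v^{-i})/(v - v⁻¹) ∈ U`. -/
def hElt (i : ℕ) : Uq F N :=
  (-(qq F)⁻¹ * vv F ^ (1 - (i : ℤ)) * (vv F - (vv F)⁻¹)⁻¹) •
    (KσInv F N i * (vv F ^ (i : ℤ) • Kσ F N i - vv F ^ (-(i : ℤ)) • KσInv F N i))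

/-- `H_I = ∏_{i ∈ r(I)} h_i` (product taken in increasing order of indices). -/
def HI (I : Finset ℕ) : Uq F N := (((rSet N I).sort (· ≤ ·)).map (hElt F N)).prod

/-- A weight `λ` is recorded by its values `(λ, α_j)` for `1 ≤ j ≤ N`;
`pairσ lam i = (λ, σ_i) = (λ, α_1 + ⋯ + α_i)`. -/
def pairσ (lam : ℕ → ℤ) (i : ℕ) : ℤ := ∑ j ∈ Finset.Icc 1 i, lam j

/-- The scalar `h_i(λ) = -q⁻¹ v^{-((λ,σ_i)+i-1)} [(λ,σ_i)+i]_v`. -/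
def hval (lam : ℕ → ℤ) (i : ℕ) : kk F :=
  -(qq F)⁻¹ * vv F ^ (-(pairσ lam i + (i : ℤ) - 1)) * qint F (pairσ lam i + (i : ℤ))

/-- The scalar `H_I(λ) = ∏_{i ∈ r(I)} h_i(λ)`. -/
def HIval (lam : ℕ → ℤ) (I : Finset ℕ) : kk F := ∏ i ∈ rSet N I, hval F lam i

/-- The left ideal `J_λ` of `U` generated by `e_1, …, e_N` and the `k_j - q^{(λ,α_j)}`. -/
def vermaIdeal (lam : ℕ → ℤ) : Submodule (Uq F N) (Uq F N) :=
  Submodule.span (Uq F N)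
    ({x | ∃ j, 1 ≤ j ∧ j ≤ N ∧ x = egen F N j} ∪
      {x | ∃ j, 1 ≤ j ∧ j ≤ N ∧
        x = kgen F N j - algebraMap (kk F) (Uq F N) (qq F ^ lam j)})

/-- The Verma module `M(λ) = U/J_λ`. -/
abbrev Verma (lam : ℕ → ℤ) : Type := Uq F N ⧸ vermaIdeal F N lam

/-- The highest weight vector `v_λ`, the image of `1` in `M(λ)`. -/
def hw (lam : ℕ → ℤ) : Verma F N lam := Submodule.Quotient.mk 1

/-- The candidate Shapovalov element `Θ_η = Σ_{I ∈ 𝕀} f_I H_I`. -/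
def Theta : Uq F N := ∑ I ∈ II N, fSet F N I * HI F N I

/-- `D^n(λ)`: the `(n-1) × (n-1)` matrix over `U` with `(i,j)` entry (1-based)
`f_{i,j+1}` if `i ≤ j`, `-h_j(λ)·1` if `i = j+1`, and `0` otherwise. -/
def Dmat (lam : ℕ → ℤ) (n : ℕ) : Matrix (Fin (n - 1)) (Fin (n - 1)) (Uq F N) :=
  Matrix.of fun i j =>
    if (i : ℕ) ≤ (j : ℕ) then fij F N ((i : ℕ) + 1) ((j : ℕ) + 2)
    else if (i : ℕ) = (j : ℕ) + 1 then
      -(algebraMap (kk F) (Uq F N) (hval F lam ((j : ℕ) + 1)))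
    else 0

/-- The left-to-right determinant of a matrix with noncommutative entries. -/
def ldet {m : ℕ} (B : Matrix (Fin m) (Fin m) (Uq F N)) : Uq F N :=
  ∑ w : Equiv.Perm (Fin m),
    ((Equiv.Perm.sign w : ℤˣ) : ℤ) • ((List.finRange m).map fun j => B (w j) j).prod

end

/-!
Let `a` and `b` be the neighbours of `i` and `i + 1` in `I`, and let `L` and `R` be the parts of
`I` below `i` and above `i + 1`. Each of `f_I`, `f_{I⁺}`, `f_{I⁻}` is `f_L`, a product of the
root vectors that join `a` to `b`, and `f_R`. Since `e_i` commutes with `f_L` and `f_R`, it acts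
only on the middle, where `[e_i, f_i]`, `[e_i, f_{a,i+1}]` and `[e_i, f_{i,b}]` turn all three
terms into multiples of the same vector `f_L f_{a,i} f_{i+1,b} f_R v_λ`. The coefficients cancel
by `[m + n] = v^m [n] + v^{-n} [m]`.
-/

section QCommutation

variable {K A : Type*} [Field K] [Ring A] [Algebra K A] {c q : K} {x y z : A}

/-- `x` and `y` commute up to the scalar `c`: `x y = c y x`. It records the weight of `y` when `x`
is a torus element. -/
def QCommute (c : K) (x y : A) : Prop := x * y = c • (y * x)

/-- The `q`-bracket `q x y - q⁻¹ y x`, by which the root vectors `f_{i,j}` are built from the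
generators. -/
def qBracket (q : K) (x y : A) : A := q • (x * y) - q⁻¹ • (y * x)

namespace QCommute

theorem zero_right (c : K) (x : A) : QCommute c x 0 := by simp [QCommute]

theorem mul_right {d : K} (hy : QCommute c x y) (hz : QCommute d x z) :
    QCommute (c * d) x (y * z) := by
  unfold QCommute at *
  rw [← mul_assoc, hy, smul_mul_assoc, mul_assoc, hz, mul_smul_comm, smul_smul, mul_assoc]

theorem qBracket_right {d : K} (hy : QCommute c x y) (hz : QCommute d x z) :
    QCommute (c * d) x (qBracket q y z) := by
  have hyz : x * (y * z) = (c * d) • (y * z * x) := hy.mul_right hz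
  have hzy : x * (z * y) = (d * c) • (z * y * x) := hz.mul_right hy
  simp only [QCommute, qBracket, mul_sub, sub_mul, mul_smul_comm, smul_mul_assoc, hyz, hzy]
  module

theorem pow_left (h : QCommute c x y) (n : ℕ) : QCommute (c ^ n) (x ^ n) y := by
  unfold QCommute at *
  induction n with
  | zero => simp
  | succ n ih =>
    rw [pow_succ, mul_assoc, h, mul_smul_comm, ← mul_assoc, ih, smul_mul_assoc, smul_smul,
      mul_assoc, pow_succ']

theorem inv_left (h : QCommute c x y) (hc : c ≠ 0) {x' : A} (hxx' : x * x' = 1)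
    (hx'x : x' * x = 1) : QCommute c⁻¹ x' y := by
  unfold QCommute at *
  calc x' * y = x' * (y * x) * x' := by rw [mul_assoc, mul_assoc y, hxx', mul_one]
    _ = c⁻¹ • (x' * (x * y) * x') := by
      rw [h, mul_smul_comm, smul_mul_assoc, inv_smul_smul₀ hc]
    _ = c⁻¹ • (y * x') := by rw [← mul_assoc x', hx'x, one_mul]

theorem commute (h : QCommute (1 : K) x y) : Commute x y := by
  simpa [QCommute, Commute, SemiconjBy] using h

end QCommute

theorem lie_qBracket (q : K) (x y z : A) :
    ⁅x, qBracket q y z⁆ = qBracket q ⁅x, y⁆ z + qBracket q y ⁅x, z⁆ := by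
  simp only [qBracket, Ring.lie_def, mul_sub, sub_mul, mul_smul_comm, smul_mul_assoc, mul_assoc]
  module

theorem qBracket_smul_left (q c : K) (x y : A) : qBracket q (c • x) y = c • qBracket q x y := by
  simp only [qBracket, smul_mul_assoc, mul_smul_comm]
  module

theorem qBracket_smul_right (q c : K) (x y : A) : qBracket q x (c • y) = c • qBracket q x y := by
  simp only [qBracket, smul_mul_assoc, mul_smul_comm]
  module

theorem qBracket_mul_left_of_commute (q : K) (h : Commute x z) :
    qBracket q (y * x) z = qBracket q y z * x := by
  simp only [qBracket, sub_mul, smul_mul_assoc, mul_assoc, h.eq]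

@[simp]
theorem qBracket_zero_left (q : K) (x : A) : qBracket q 0 x = 0 := by simp [qBracket]

@[simp]
theorem qBracket_zero_right (q : K) (x : A) : qBracket q x 0 = 0 := by simp [qBracket]

theorem qBracket_smul_sub_left (hq : q ≠ 0) (hq2 : q ^ 2 - (q ^ 2)⁻¹ ≠ 0) {k k' : A}
    (hk : QCommute (q ^ 2) k y) (hk' : QCommute (q ^ 2)⁻¹ k' y) :
    qBracket q ((q ^ 2 - (q ^ 2)⁻¹)⁻¹ • (k - k')) y = q • (y * k) := by
  have hscalar : q ^ 3 - q⁻¹ = q * (q ^ 2 - (q ^ 2)⁻¹) := by field_simp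
  have hbracket : qBracket q (k - k') y = (q ^ 3 - q⁻¹) • (y * k) := by
    unfold QCommute at hk hk'
    simp only [qBracket, sub_mul, mul_sub, hk, hk']
    match_scalars <;> (field_simp; try ring)
  rw [qBracket_smul_left, hbracket, hscalar, smul_smul, mul_comm q, inv_mul_cancel_left₀ hq2]

theorem qBracket_smul_sub_right (hq : q ≠ 0) (hq2 : q ^ 2 - (q ^ 2)⁻¹ ≠ 0) {k k' : A}
    (hk : QCommute (q ^ 2) k x) (hk' : QCommute (q ^ 2)⁻¹ k' x) :
    qBracket q x ((q ^ 2 - (q ^ 2)⁻¹)⁻¹ • (k - k')) = -q⁻¹ • (x * k') := by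
  have hscalar : (q ^ 3)⁻¹ - q = -q⁻¹ * (q ^ 2 - (q ^ 2)⁻¹) := by field_simp; ring
  have hbracket : qBracket q x (k - k') = ((q ^ 3)⁻¹ - q) • (x * k') := by
    unfold QCommute at hk hk'
    simp only [qBracket, sub_mul, mul_sub, hk, hk']
    match_scalars <;> field_simp <;> ring
  rw [qBracket_smul_right, hbracket, hscalar, smul_smul, mul_comm (-q⁻¹),
    inv_mul_cancel_left₀ hq2]

end QCommutation

section ScalarAction

variable {K A M : Type*} [Field K] [Ring A] [Algebra K A] [AddCommGroup M] [Module K M]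
  [Module A M] [IsScalarTower K A M] {c : K} {x : A} {w : M}

theorem pow_smul_of_smul_eq (h : x • w = c • w) (n : ℕ) : x ^ n • w = c ^ n • w := by
  induction n with
  | zero => simp
  | succ n ih => rw [pow_succ, mul_smul, h, smul_comm, ih, smul_smul, pow_succ']

theorem inv_smul_of_smul_eq (h : x • w = c • w) (hc : c ≠ 0) {x' : A} (hx'x : x' * x = 1) :
    x' • w = c⁻¹ • w := by
  rw [eq_inv_smul_iff₀ hc, ← smul_comm, ← h, ← mul_smul, hx'x, one_smul]

theorem list_prod_map_smul_of_smul_eq {ι : Type*} {l : List ι} {x : ι → A} {c : ι → K}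
    (h : ∀ j ∈ l, x j • w = c j • w) : (l.map x).prod • w = (l.map c).prod • w := by
  induction l with
  | nil => simp
  | cons a l ih =>
    rw [List.forall_mem_cons] at h
    rw [List.map_cons, List.prod_cons, mul_smul, ih h.2, smul_comm, h.1, smul_smul,
      List.map_cons, List.prod_cons, mul_comm]

theorem QCommute.smul_smul_of_smul_eq {d : K} {y : A} (hxy : QCommute d x y) (h : x • w = c • w) :
    x • y • w = (d * c) • y • w := by
  rw [← mul_smul, hxy, smul_assoc, mul_smul, h, smul_comm y, smul_smul]

end ScalarAction

section ModuleAction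

variable {A M : Type*} [Ring A] [AddCommGroup M] [Module A M] {x y : A}

theorem smul_smul_eq_smul_smul_of_commute (h : Commute x y) (w : M) : x • y • w = y • x • w := by
  rw [← mul_smul, h.eq, mul_smul]

theorem smul_smul_eq_zero_of_commute (h : Commute x y) {w : M} (hw : x • w = 0) :
    x • y • w = 0 := by
  rw [smul_smul_eq_smul_smul_of_commute h, hw, smul_zero]

theorem smul_smul_eq_lie_smul {w : M} (h : x • w = 0) : x • y • w = ⁅x, y⁆ • w := by
  rw [Ring.lie_def, sub_smul, mul_smul, mul_smul, h, smul_zero, sub_zero]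

end ModuleAction

section QuantumIntegers

variable {F : Type} [Field F]

theorem qq_ne_zero : qq F ≠ 0 := RatFunc.X_ne_zero

theorem vv_ne_zero : vv F ≠ 0 := pow_ne_zero _ qq_ne_zero

theorem vv_sub_inv_ne_zero : vv F - (vv F)⁻¹ ≠ 0 := by
  intro h
  have hq4 : (RatFunc.X : RatFunc F) ^ 4 = 1 := by
    calc qq F ^ 4 = vv F * vv F := by rw [vv]; ring
      _ = 1 := by nth_rw 2 [sub_eq_zero.mp h]; exact mul_inv_cancel₀ vv_ne_zero
  exact RatFunc.transcendental_X.pow four_pos (hq4 ▸ isAlgebraic_one)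

theorem qq_zpow_sq (n : ℤ) : (qq F ^ n) ^ 2 = vv F ^ n := by
  rw [vv, ← zpow_natCast, ← zpow_natCast, zpow_comm]

theorem qint_add (m n : ℤ) : qint F (m + n) = vv F ^ m * qint F n + vv F ^ (-n) * qint F m := by
  have hv : vv F ≠ 0 := vv_ne_zero
  simp only [qint, neg_add, zpow_add₀ hv]
  ring

theorem pairσ_succ (lam : ℕ → ℤ) (i : ℕ) : pairσ lam (i + 1) = pairσ lam i + lam (i + 1) :=
  Finset.sum_Icc_succ_top (by omega) lam

theorem pairσ_neg (lam : ℕ → ℤ) (i : ℕ) : pairσ (-lam) i = -pairσ lam i := by simp [pairσ]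

theorem list_prod_range_zpow (lam : ℕ → ℤ) (i : ℕ) :
    ((List.range i).map fun j => qq F ^ lam (j + 1)).prod = qq F ^ pairσ lam i := by
  induction i with
  | zero => simp [pairσ]
  | succ i ih => rw [List.prod_range_succ, ih, pairσ_succ, zpow_add₀ qq_ne_zero]

theorem qint_add_hval_eq_zero (lam : ℕ → ℤ) {i : ℕ} (hi : 1 ≤ i) :
    qint F (lam i + 1) - (qq F)⁻¹ * vv F ^ (-(lam i + 1)) * hval F lam (i - 1) +
      qq F * vv F ^ lam i * hval F lam i = 0 := by
  obtain ⟨i, rfl⟩ := Nat.exists_eq_add_of_le' hi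
  rw [Nat.add_sub_cancel]
  set x : ℤ := pairσ lam i + i with hx
  set n : ℤ := lam (i + 1) + 1
  have hlow : (qq F)⁻¹ * vv F ^ (-n) * hval F lam i = -(vv F ^ (-n - x) * qint F x) := by
    rw [hval, ← hx, show -(x - 1) = -x + 1 by ring, sub_eq_add_neg, zpow_add₀ vv_ne_zero,
      zpow_add₀ vv_ne_zero, zpow_one]
    have := qq_ne_zero (F := F)
    rw [vv]
    field_simp
  have hhigh : qq F * vv F ^ lam (i + 1) * hval F lam (i + 1) =
      -(vv F ^ (-x) * qint F (x + n)) := by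
    have hexp : pairσ lam (i + 1) + ((i + 1 : ℕ) : ℤ) = x + n := by
      rw [pairσ_succ]; push_cast; ring
    have hpow : vv F ^ (-x) = vv F ^ lam (i + 1) * vv F ^ (-(x + n - 1)) := by
      rw [← zpow_add₀ vv_ne_zero]; congr 1; omega
    rw [hval, hexp, hpow]
    have := qq_ne_zero (F := F)
    field_simp
  have hcancel : vv F ^ (-x) * vv F ^ x = 1 := by
    rw [← zpow_add₀ vv_ne_zero, neg_add_cancel, zpow_zero]
  rw [hlow, hhigh, qint_add x n, sub_eq_add_neg (-n), zpow_add₀ vv_ne_zero]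
  linear_combination -(qint F n) * hcancel

end QuantumIntegers

section Relations

variable {F : Type} [Field F] {N : ℕ}

theorem kgen_mul_kinvgen {i : ℕ} (hi : 1 ≤ i ∧ i ≤ N) : kgen F N i * kinvgen F N i = 1 := by
  simpa [kgen, kinvgen, hi, gen] using
    RingQuot.mkAlgHom_rel (kk F) (UqRel.kkinv (F := F) (N := N) ⟨i - 1, by omega⟩)

theorem kinvgen_mul_kgen {i : ℕ} (hi : 1 ≤ i ∧ i ≤ N) : kinvgen F N i * kgen F N i = 1 := by
  simpa [kgen, kinvgen, hi, gen] using
    RingQuot.mkAlgHom_rel (kk F) (UqRel.kinvk (F := F) (N := N) ⟨i - 1, by omega⟩)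

theorem qCommute_kgen_fgen {i : ℕ} (hi : 1 ≤ i ∧ i ≤ N) (j : ℕ) :
    QCommute (qq F ^ (-cartan i j)) (kgen F N i) (fgen F N j) := by
  by_cases hj : 1 ≤ j ∧ j ≤ N
  · have hconj : kgen F N i * fgen F N j * kinvgen F N i = qq F ^ (-cartan i j) • fgen F N j := by
      have h := RingQuot.mkAlgHom_rel (kk F)
        (UqRel.kf (F := F) (N := N) ⟨i - 1, by omega⟩ ⟨j - 1, by omega⟩)
      simp only [map_mul, map_smul, Nat.sub_add_cancel hi.1, Nat.sub_add_cancel hj.1] at h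
      simpa only [kgen, kinvgen, fgen, hi, hj, gen, and_self, dite_true] using h
    rw [QCommute, ← smul_mul_assoc, ← hconj, mul_assoc _ (kinvgen F N i), kinvgen_mul_kgen hi,
      mul_one]
  · simpa only [fgen, hj, dite_false] using QCommute.zero_right _ _

theorem lie_egen_fgen_self {i : ℕ} (hi : 1 ≤ i ∧ i ≤ N) :
    ⁅egen F N i, fgen F N i⁆ =
      (vv F - (vv F)⁻¹)⁻¹ • (kgen F N i ^ 2 - kinvgen F N i ^ 2) := by
  have h := RingQuot.mkAlgHom_rel (kk F)
    (UqRel.ef (F := F) (N := N) ⟨i - 1, by omega⟩ ⟨i - 1, by omega⟩)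
  have hinv : qq F ^ (-2 : ℤ) = (vv F)⁻¹ := by rw [vv, zpow_neg]; norm_cast
  simp only [if_true, map_mul, map_sub, map_smul, map_pow, hinv] at h
  simpa only [Ring.lie_def, vv, egen, fgen, kgen, kinvgen, hi, gen, and_self, dite_true]
    using h

theorem commute_egen_fgen {i j : ℕ} (hij : i ≠ j) : Commute (egen F N i) (fgen F N j) := by
  unfold egen fgen
  split_ifs with hi hj
  · have hne : (⟨i - 1, by omega⟩ : Fin N) ≠ ⟨j - 1, by omega⟩ := by
      rw [Ne, Fin.mk.injEq]; omega
    have h := RingQuot.mkAlgHom_rel (kk F)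
      (UqRel.ef (F := F) (N := N) ⟨i - 1, by omega⟩ ⟨j - 1, by omega⟩)
    simp only [if_neg hne, map_mul, map_sub, map_zero] at h
    exact sub_eq_zero.mp h
  all_goals simp

theorem cartan_eq_zero {i j : ℕ} (h : i + 1 < j ∨ j + 1 < i) : cartan i j = 0 := by
  rw [cartan, if_neg (by omega), if_neg (by omega)]

theorem commute_kgen_fgen {i j : ℕ} (hi : 1 ≤ i ∧ i ≤ N) (hij : i + 1 < j ∨ j + 1 < i) :
    Commute (kgen F N i) (fgen F N j) := by
  have h := qCommute_kgen_fgen (F := F) hi j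
  rw [cartan_eq_zero hij, neg_zero, zpow_zero] at h
  exact h.commute

end Relations

section RootVectors

variable {F : Type} [Field F] {N : ℕ}

theorem fij_self_succ (a : ℕ) : fij F N a (a + 1) = fgen F N a := by
  rw [fij, show a + 1 - a - 1 = 0 by omega, fword]

theorem fij_succ {a b : ℕ} (hab : a < b) :
    fij F N a (b + 1) = qBracket (qq F) (fij F N a b) (fgen F N b) := by
  rw [fij, show b + 1 - a - 1 = (b - a - 1) + 1 by omega, fword,
    show a + 1 + (b - a - 1) = b by omega, qBracket, fij]

theorem fij_mem (S : Subalgebra (kk F) (Uq F N)) {a b : ℕ} (hab : a < b)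
    (h : ∀ j, a ≤ j → j < b → fgen F N j ∈ S) : fij F N a b ∈ S := by
  induction b, hab using Nat.le_induction with
  | base => simpa only [fij_self_succ] using h a le_rfl (lt_add_one a)
  | succ b hab ih =>
    have hx : fij F N a b ∈ S := ih fun j haj hjb => h j haj (by omega)
    have hy : fgen F N b ∈ S := h b (by omega) (lt_add_one b)
    rw [fij_succ hab]
    exact S.sub_mem (S.smul_mem (S.mul_mem hx hy) _) (S.smul_mem (S.mul_mem hy hx) _)

theorem mem_centralizer_singleton_iff {x y : Uq F N} :
    y ∈ Subalgebra.centralizer (kk F) {x} ↔ Commute x y := by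
  rw [Subalgebra.mem_centralizer_iff, commute_iff_eq]
  simp only [Set.mem_singleton_iff, forall_eq]

theorem commute_fij {x : Uq F N} {a b : ℕ} (hab : a < b)
    (h : ∀ j, a ≤ j → j < b → Commute x (fgen F N j)) : Commute x (fij F N a b) :=
  mem_centralizer_singleton_iff.mp <| fij_mem _ hab fun j haj hjb =>
    mem_centralizer_singleton_iff.mpr (h j haj hjb)

theorem commute_egen_fij {i a b : ℕ} (hab : a < b) (hi : i < a ∨ b ≤ i) :
    Commute (egen F N i) (fij F N a b) :=
  commute_fij hab fun j haj hjb => commute_egen_fgen (by omega)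

theorem qCommute_kgen_fij {i : ℕ} (hi : 1 ≤ i ∧ i ≤ N) {a b : ℕ} (hab : a < b) :
    QCommute (qq F ^ (-∑ j ∈ Finset.Ico a b, cartan i j)) (kgen F N i) (fij F N a b) := by
  induction b, hab using Nat.le_induction with
  | base => simpa only [fij_self_succ, Nat.Ico_succ_singleton, Finset.sum_singleton] using
      qCommute_kgen_fgen hi a
  | succ b hab ih =>
    rw [fij_succ hab, Finset.sum_Ico_succ_top (by omega), neg_add, zpow_add₀ qq_ne_zero]
    exact ih.qBracket_right (qCommute_kgen_fgen hi b)

theorem sum_cartan_Ico_left {a i : ℕ} (hai : a < i) : ∑ j ∈ Finset.Ico a i, cartan i j = -1 := by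
  rw [Finset.sum_eq_single (i - 1)]
  · rw [cartan, if_neg (by omega), if_pos (by omega)]
  · intro j hj hne
    rw [Finset.mem_Ico] at hj
    exact cartan_eq_zero (by omega)
  · intro h
    exact absurd (Finset.mem_Ico.mpr ⟨by omega, by omega⟩) h

theorem sum_cartan_Ico_right {i b : ℕ} (hib : i + 1 < b) :
    ∑ j ∈ Finset.Ico (i + 1) b, cartan i j = -1 := by
  rw [Finset.sum_eq_single (i + 1)]
  · rw [cartan, if_neg (by omega), if_pos (by omega)]
  · intro j hj hne
    rw [Finset.mem_Ico] at hj
    exact cartan_eq_zero (by omega)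
  · intro h
    exact absurd (Finset.mem_Ico.mpr ⟨le_rfl, hib⟩) h

theorem qCommute_kgen_fij_left {a i : ℕ} (hi : 1 ≤ i ∧ i ≤ N) (hai : a < i) :
    QCommute (qq F) (kgen F N i) (fij F N a i) := by
  simpa only [sum_cartan_Ico_left hai, neg_neg, zpow_one] using qCommute_kgen_fij (F := F) hi hai

theorem qCommute_kgen_fij_right {i b : ℕ} (hi : 1 ≤ i ∧ i ≤ N) (hib : i + 1 < b) :
    QCommute (qq F) (kgen F N i) (fij F N (i + 1) b) := by
  simpa only [sum_cartan_Ico_right hib, neg_neg, zpow_one] using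
    qCommute_kgen_fij (F := F) hi hib

theorem qCommute_kinvgen_sq {i : ℕ} (hi : 1 ≤ i ∧ i ≤ N) {y : Uq F N}
    (h : QCommute (qq F) (kgen F N i) y) : QCommute (vv F)⁻¹ (kinvgen F N i ^ 2) y := by
  rw [vv, ← inv_pow]
  exact (h.inv_left qq_ne_zero (kgen_mul_kinvgen hi) (kinvgen_mul_kgen hi)).pow_left 2

theorem lie_egen_fij_right {i b : ℕ} (hi : 1 ≤ i ∧ i ≤ N) (hib : i + 1 < b) :
    ⁅egen F N i, fij F N i b⁆ = qq F • (fij F N (i + 1) b * kgen F N i ^ 2) := by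
  induction b, hib using Nat.le_induction with
  | base =>
    have hcomm : ⁅egen F N i, fgen F N (i + 1)⁆ = 0 :=
      commute_iff_lie_eq.mp (commute_egen_fgen (by omega))
    have hk : QCommute (qq F) (kgen F N i) (fgen F N (i + 1)) := by
      simpa only [fij_self_succ] using
        qCommute_kgen_fij_right (F := F) hi (lt_add_one (i + 1))
    rw [fij_succ (lt_add_one i), fij_self_succ, fij_self_succ, lie_qBracket, hcomm,
      qBracket_zero_right, add_zero, lie_egen_fgen_self hi]
    exact qBracket_smul_sub_left qq_ne_zero vv_sub_inv_ne_zero (hk.pow_left 2)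
      (qCommute_kinvgen_sq hi hk)
  | succ b hib ih =>
    have hcomm : ⁅egen F N i, fgen F N b⁆ = 0 :=
      commute_iff_lie_eq.mp (commute_egen_fgen (by omega))
    have hk : Commute (kgen F N i ^ 2) (fgen F N b) :=
      (commute_kgen_fgen hi (by omega)).pow_left 2
    rw [fij_succ (by omega), fij_succ hib, lie_qBracket, hcomm, qBracket_zero_right, add_zero, ih,
      qBracket_smul_left, qBracket_mul_left_of_commute _ hk]

theorem lie_egen_fij_left {a i : ℕ} (hi : 1 ≤ i ∧ i ≤ N) (hai : a < i) :
    ⁅egen F N i, fij F N a (i + 1)⁆ = -(qq F)⁻¹ • (fij F N a i * kinvgen F N i ^ 2) := by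
  have hcomm : ⁅egen F N i, fij F N a i⁆ = 0 :=
    commute_iff_lie_eq.mp (commute_egen_fij hai (Or.inr le_rfl))
  have hk : QCommute (qq F) (kgen F N i) (fij F N a i) := qCommute_kgen_fij_left hi hai
  rw [fij_succ hai, lie_qBracket, hcomm, qBracket_zero_left, zero_add, lie_egen_fgen_self hi]
  exact qBracket_smul_sub_right qq_ne_zero vv_sub_inv_ne_zero (hk.pow_left 2)
    (qCommute_kinvgen_sq hi hk)

end RootVectors

section ProductsOverSubsets

variable {F : Type} [Field F] {N : ℕ}

theorem fList_append (A B : List ℕ) (c : ℕ) :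
    fList F N (A ++ c :: B) = fList F N (A ++ [c]) * fList F N (c :: B) := by
  induction A with
  | nil => simp [fList]
  | cons a A ih => cases A <;> simp_all [fList, mul_assoc]

theorem fSet_eq_fList {S : Finset ℕ} {l : List ℕ} (hl : l.Pairwise (· < ·))
    (hS : ∀ x, x ∈ S ↔ x ∈ l) : fSet F N S = fList F N l := by
  have hSl : S = l.toFinset := by ext x; rw [List.mem_toFinset, hS]
  rw [fSet, hSl, (List.toFinset_sort (· ≤ ·) (hl.imp Nat.ne_of_lt)).mpr (hl.imp Nat.le_of_lt)]

theorem fSet_union {S T : Finset ℕ} {c : ℕ} (hS : IsGreatest (S : Set ℕ) c)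
    (hT : IsLeast (T : Set ℕ) c) : fSet F N (S ∪ T) = fSet F N S * fSet F N T := by
  set A := (S.erase c).sort (· ≤ ·)
  set B := (T.erase c).sort (· ≤ ·)
  have hA : ∀ x, x ∈ A ↔ x ≠ c ∧ x ∈ S := fun x => by simp [A]
  have hB : ∀ x, x ∈ B ↔ x ≠ c ∧ x ∈ T := fun x => by simp [B]
  have hAc : ∀ x ∈ A, x < c := fun x hx =>
    lt_of_le_of_ne (hS.2 ((hA x).mp hx).2) ((hA x).mp hx).1
  have hcB : ∀ x ∈ B, c < x := fun x hx =>
    lt_of_le_of_ne (hT.2 ((hB x).mp hx).2) ((hB x).mp hx).1.symm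
  have hAsort : A.Pairwise (· < ·) := (Finset.sortedLT_sort _).pairwise
  have hBsort : B.Pairwise (· < ·) := (Finset.sortedLT_sort _).pairwise
  have hSc : c ∈ S := hS.1
  have hTc : c ∈ T := hT.1
  have hST : fSet F N (S ∪ T) = fList F N (A ++ c :: B) :=
    fSet_eq_fList (by grind [List.pairwise_cons]) (by grind)
  have hSA : fSet F N S = fList F N (A ++ [c]) :=
    fSet_eq_fList (by grind) (by grind)
  have hTB : fSet F N T = fList F N (c :: B) :=
    fSet_eq_fList (List.pairwise_cons.mpr ⟨hcB, hBsort⟩) (by grind)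
  rw [hST, hSA, hTB, fList_append]

theorem fSet_eq_mul_fList_mul {S L R : Finset ℕ} {l : List ℕ} {a b : ℕ}
    (hL : IsGreatest (L : Set ℕ) a) (hR : IsLeast (R : Set ℕ) b)
    (hl : (a :: (l ++ [b])).Pairwise (· < ·)) (hS : ∀ x, x ∈ S ↔ x ∈ L ∨ x ∈ l ∨ x ∈ R) :
    fSet F N S = fSet F N L * (fList F N (a :: (l ++ [b])) * fSet F N R) := by
  set T := (a :: (l ++ [b])).toFinset
  obtain ⟨halb, hlb⟩ := List.pairwise_cons.mp hl
  have hxb : ∀ x ∈ l, x < b := fun x hx => (List.pairwise_append.mp hlb).2.2 x hx b (by simp)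
  have hab : a < b := halb b (by simp)
  have hT : ∀ x, x ∈ T ↔ x = a ∨ x = b ∨ x ∈ l := fun x => by simp [T]
  have hTa : IsLeast (↑(T ∪ R) : Set ℕ) a := by
    refine ⟨by simp [hT], fun x hx => ?_⟩
    have hbx : x ∈ R → b ≤ x := fun hxR => hR.2 hxR
    grind
  have hTb : IsGreatest (T : Set ℕ) b := ⟨by simp [hT], fun x hx => by grind⟩
  have hSunion : S = L ∪ (T ∪ R) := by
    ext x
    have haL : a ∈ L := hL.1
    have hbR : b ∈ R := hR.1
    grind
  rw [hSunion, fSet_union hL hTa, fSet_union hTb hR,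
    fSet_eq_fList hl fun _ => List.mem_toFinset]

theorem fList_mem (S : Subalgebra (kk F) (Uq F N)) {l : List ℕ} (hl : l.Pairwise (· < ·))
    (h : ∀ a ∈ l, ∀ b ∈ l, ∀ j, a ≤ j → j < b → fgen F N j ∈ S) : fList F N l ∈ S := by
  induction l with
  | nil => exact S.one_mem
  | cons a l ih =>
    cases l with
    | nil => exact S.one_mem
    | cons b l =>
      rw [List.pairwise_cons] at hl
      exact S.mul_mem
        (fij_mem S (hl.1 b (by simp)) (h a (by simp) b (by simp)))
        (ih hl.2 fun c hc d hd => h c (List.mem_cons_of_mem a hc) d (List.mem_cons_of_mem a hd))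

theorem commute_fSet {x : Uq F N} {S : Finset ℕ}
    (h : ∀ a ∈ S, ∀ b ∈ S, ∀ j, a ≤ j → j < b → Commute x (fgen F N j)) :
    Commute x (fSet F N S) :=
  mem_centralizer_singleton_iff.mp <|
    fList_mem _ (Finset.sortedLT_sort S).pairwise fun a ha b hb j haj hjb =>
      mem_centralizer_singleton_iff.mpr <|
        h a ((Finset.mem_sort _).mp ha) b ((Finset.mem_sort _).mp hb) j haj hjb

theorem commute_egen_fSet_of_le {i : ℕ} {S : Finset ℕ} (hS : ∀ x ∈ S, x ≤ i) :
    Commute (egen F N i) (fSet F N S) :=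
  commute_fSet fun _ _ b hb _ _ hjb => commute_egen_fgen (by have := hS b hb; omega)

theorem commute_egen_fSet_of_gt {i : ℕ} {S : Finset ℕ} (hS : ∀ x ∈ S, i < x) :
    Commute (egen F N i) (fSet F N S) :=
  commute_fSet fun a ha _ _ _ haj _ => commute_egen_fgen (by have := hS a ha; omega)

theorem commute_kgen_fSet {i : ℕ} (hi : 1 ≤ i ∧ i ≤ N) {S : Finset ℕ}
    (hS : ∀ x ∈ S, i + 1 < x) : Commute (kgen F N i) (fSet F N S) :=
  commute_fSet fun a ha _ _ _ haj _ => commute_kgen_fgen hi (by have := hS a ha; omega)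

end ProductsOverSubsets

section WeightVectors

variable {F : Type} [Field F] {N : ℕ} {M : Type*} [AddCommGroup M] [Module (kk F) M]
  [Module (Uq F N) M] [IsScalarTower (kk F) (Uq F N) M] {lam : ℕ → ℤ} {w : M}

variable (F N) in
/-- `w` has weight `λ`, i.e. each `k_j` acts on it by `q^{(λ, α_j)}`. -/
def IsWeightVector (lam : ℕ → ℤ) (w : M) : Prop :=
  ∀ j, 1 ≤ j ∧ j ≤ N → kgen F N j • w = qq F ^ lam j • w

theorem kinvgen_smul {i : ℕ} (hi : 1 ≤ i ∧ i ≤ N) {n : ℤ} (h : kgen F N i • w = qq F ^ n • w) :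
    kinvgen F N i • w = qq F ^ (-n) • w := by
  rw [zpow_neg]
  exact inv_smul_of_smul_eq h (zpow_ne_zero n qq_ne_zero) (kinvgen_mul_kgen hi)

theorem kgen_sq_smul {i : ℕ} {n : ℤ} (h : kgen F N i • w = qq F ^ n • w) :
    kgen F N i ^ 2 • w = vv F ^ n • w := by
  rw [pow_smul_of_smul_eq h, qq_zpow_sq]

theorem kinvgen_sq_smul {i : ℕ} (hi : 1 ≤ i ∧ i ≤ N) {n : ℤ}
    (h : kgen F N i • w = qq F ^ n • w) : kinvgen F N i ^ 2 • w = vv F ^ (-n) • w := by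
  rw [pow_smul_of_smul_eq (kinvgen_smul hi h), qq_zpow_sq]

namespace IsWeightVector

theorem Kσ_smul (hw : IsWeightVector F N lam w) {i : ℕ} (hi : i ≤ N) :
    Kσ F N i • w = vv F ^ pairσ lam i • w := by
  rw [Kσ, kσ, pow_smul_of_smul_eq (list_prod_map_smul_of_smul_eq
    fun j hj => hw (j + 1) ⟨by omega, by have := List.mem_range.mp hj; omega⟩),
    list_prod_range_zpow, qq_zpow_sq]

theorem KσInv_smul (hw : IsWeightVector F N lam w) {i : ℕ} (hi : i ≤ N) :
    KσInv F N i • w = vv F ^ (-pairσ lam i) • w := by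
  have hkinv : ∀ j ∈ List.range i, kinvgen F N (j + 1) • w = qq F ^ (-lam) (j + 1) • w := by
    intro j hj
    have hjN : 1 ≤ j + 1 ∧ j + 1 ≤ N := ⟨by omega, by have := List.mem_range.mp hj; omega⟩
    exact kinvgen_smul hjN (hw (j + 1) hjN)
  rw [KσInv, kσinv, pow_smul_of_smul_eq (list_prod_map_smul_of_smul_eq hkinv),
    list_prod_range_zpow, pairσ_neg, qq_zpow_sq]

theorem hElt_smul (hw : IsWeightVector F N lam w) {i : ℕ} (hi : i ≤ N) :
    hElt F N i • w = hval F lam i • w := by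
  have hdiff : (vv F ^ (i : ℤ) • Kσ F N i - vv F ^ (-(i : ℤ)) • KσInv F N i) • w =
      (vv F ^ (pairσ lam i + i) - vv F ^ (-(pairσ lam i + i))) • w := by
    rw [sub_smul, smul_assoc, smul_assoc, hw.Kσ_smul hi, hw.KσInv_smul hi, smul_smul, smul_smul,
      ← sub_smul, ← zpow_add₀ vv_ne_zero, ← zpow_add₀ vv_ne_zero, neg_add, add_comm (i : ℤ),
      add_comm (-(i : ℤ))]
  have hexp : vv F ^ (-(pairσ lam i + (i : ℤ) - 1)) =
      vv F ^ (1 - (i : ℤ)) * vv F ^ (-pairσ lam i) := by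
    rw [← zpow_add₀ vv_ne_zero]; congr 1; ring
  rw [hElt, smul_assoc, mul_smul (KσInv F N i), hdiff, smul_comm (KσInv F N i), hw.KσInv_smul hi,
    smul_smul, smul_smul, hval, qint, hexp]
  congr 1
  ring

theorem HI_smul (hw : IsWeightVector F N lam w) (I : Finset ℕ) :
    HI F N I • w = HIval F N lam I • w := by
  have hle : ∀ j ∈ (rSet N I).sort (· ≤ ·), j ≤ N := by
    intro j hj
    simp only [rSet, Finset.mem_sort, Finset.mem_image, Finset.mem_sdiff, Finset.mem_Icc] at hj
    omega
  rw [HI, list_prod_map_smul_of_smul_eq fun j hj => hw.hElt_smul (hle j hj), HIval,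
    ← List.prod_toFinset _ (Finset.sort_nodup _ _), Finset.sort_toFinset]

theorem smul_mul_HI_smul (hw : IsWeightVector F N lam w) (x y : Uq F N) (I : Finset ℕ) :
    x • (y * HI F N I) • w = HIval F N lam I • x • y • w := by
  rw [mul_smul, hw.HI_smul, smul_comm y, smul_comm x]

end IsWeightVector

theorem HIval_erase (lam : ℕ → ℤ) {I : Finset ℕ} {s : ℕ} (hs : s ∈ I) (hs1 : 1 ≤ s)
    (hsN : s ≤ N + 1) : HIval F N lam (I.erase s) = HIval F N lam I * hval F lam (s - 1) := by
  have hinsert : rSet N (I.erase s) = insert (s - 1) (rSet N I) := by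
    rw [rSet, rSet, Finset.sdiff_erase (Finset.mem_Icc.mpr ⟨hs1, hsN⟩), Finset.image_insert]
  have hnotMem : s - 1 ∉ rSet N I := by
    simp only [rSet, Finset.mem_image, Finset.mem_sdiff, Finset.mem_Icc, not_exists, not_and]
    rintro x ⟨⟨hx1, -⟩, hxI⟩ hxs
    exact hxI (by rwa [show x = s by omega])
  rw [HIval, hinsert, Finset.prod_insert hnotMem, mul_comm, HIval]

theorem isWeightVector_hw (lam : ℕ → ℤ) : IsWeightVector F N lam (hw F N lam) := by
  intro j hj
  rw [← algebraMap_smul (Uq F N), ← sub_eq_zero, ← sub_smul, hw, ← Submodule.Quotient.mk_smul,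
    Submodule.Quotient.mk_eq_zero, smul_eq_mul, mul_one]
  exact Submodule.subset_span (Or.inr ⟨j, hj.1, hj.2, rfl⟩)

theorem egen_smul_hw (lam : ℕ → ℤ) {j : ℕ} (hj : 1 ≤ j ∧ j ≤ N) :
    egen F N j • hw F N lam = 0 := by
  rw [hw, ← Submodule.Quotient.mk_smul, Submodule.Quotient.mk_eq_zero, smul_eq_mul, mul_one]
  exact Submodule.subset_span (Or.inl ⟨j, hj.1, hj.2, rfl⟩)

end WeightVectors

section RaisingOperators

variable {F : Type} [Field F] {N : ℕ} {M : Type*} [AddCommGroup M] [Module (kk F) M]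
  [Module (Uq F N) M] [IsScalarTower (kk F) (Uq F N) M] {i : ℕ} {n : ℤ} {w : M}

theorem egen_smul_fgen_smul (hi : 1 ≤ i ∧ i ≤ N) (he : egen F N i • w = 0)
    (hk : kgen F N i • w = qq F ^ n • w) :
    egen F N i • fgen F N i • w = qint F n • w := by
  rw [smul_smul_eq_lie_smul he, lie_egen_fgen_self hi, smul_assoc, sub_smul, kgen_sq_smul hk,
    kinvgen_sq_smul hi hk, ← sub_smul, smul_smul, qint, div_eq_inv_mul]

theorem egen_smul_fij_left_smul (hi : 1 ≤ i ∧ i ≤ N) {a : ℕ} (hai : a < i)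
    (he : egen F N i • w = 0) (hk : kgen F N i • w = qq F ^ n • w) :
    egen F N i • fij F N a (i + 1) • w =
      -((qq F)⁻¹ * vv F ^ (-n)) • fij F N a i • w := by
  rw [smul_smul_eq_lie_smul he, lie_egen_fij_left hi hai, smul_assoc, mul_smul,
    kinvgen_sq_smul hi hk, smul_comm (fij F N a i), smul_smul, neg_mul]

theorem egen_smul_fij_right_smul (hi : 1 ≤ i ∧ i ≤ N) {b : ℕ} (hib : i + 1 < b)
    (he : egen F N i • w = 0) (hk : kgen F N i • w = qq F ^ n • w) :
    egen F N i • fij F N i b • w = (qq F * vv F ^ n) • fij F N (i + 1) b • w := by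
  rw [smul_smul_eq_lie_smul he, lie_egen_fij_right hi hib, smul_assoc, mul_smul,
    kgen_sq_smul hk, smul_comm (fij F N (i + 1) b), smul_smul]

end RaisingOperators

section RaisingOperatorsOnProducts

variable {F : Type} [Field F] {N : ℕ} {M : Type*} [AddCommGroup M] [Module (kk F) M]
  [Module (Uq F N) M] [IsScalarTower (kk F) (Uq F N) M] {i a b : ℕ} {n : ℤ} {w : M}
  {S L R : Finset ℕ}

theorem kgen_smul_fSet_smul (hi : 1 ≤ i ∧ i ≤ N) (hR : ∀ x ∈ R, i + 1 < x)
    (hk : kgen F N i • w = qq F ^ n • w) :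
    kgen F N i • fSet F N R • w = qq F ^ n • fSet F N R • w := by
  rw [smul_smul_eq_smul_smul_of_commute (commute_kgen_fSet hi hR), hk, smul_comm]

theorem kgen_smul_fij_smul (hi : 1 ≤ i ∧ i ≤ N) (hib : i + 1 < b)
    (hk : kgen F N i • w = qq F ^ n • w) :
    kgen F N i • fij F N (i + 1) b • w = qq F ^ (n + 1) • fij F N (i + 1) b • w := by
  rw [(qCommute_kgen_fij_right hi hib).smul_smul_of_smul_eq hk, zpow_add_one₀ qq_ne_zero, mul_comm]

theorem egen_smul_fList_mem_succ_mem (hi : 1 ≤ i ∧ i ≤ N) (hai : a < i) (hib : i + 1 < b)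
    (he : egen F N i • w = 0) (hk : kgen F N i • w = qq F ^ n • w) :
    egen F N i • fList F N [a, i, i + 1, b] • w =
      qint F (n + 1) • fij F N a i • fij F N (i + 1) b • w := by
  have hea : Commute (egen F N i) (fij F N a i) := commute_egen_fij hai (Or.inr le_rfl)
  have heb : egen F N i • fij F N (i + 1) b • w = 0 :=
    smul_smul_eq_zero_of_commute (commute_egen_fij hib (Or.inl (lt_add_one i))) he
  simp only [fList, fij_self_succ, mul_smul (α := Uq F N), one_smul]
  rw [smul_smul_eq_smul_smul_of_commute hea,
    egen_smul_fgen_smul hi heb (kgen_smul_fij_smul hi hib hk), smul_comm (fij F N a i)]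

theorem egen_smul_fList_notMem_succ_mem (hi : 1 ≤ i ∧ i ≤ N) (hai : a < i) (hib : i + 1 < b)
    (he : egen F N i • w = 0) (hk : kgen F N i • w = qq F ^ n • w) :
    egen F N i • fList F N [a, i + 1, b] • w =
      -((qq F)⁻¹ * vv F ^ (-(n + 1))) • fij F N a i • fij F N (i + 1) b • w := by
  have heb : egen F N i • fij F N (i + 1) b • w = 0 :=
    smul_smul_eq_zero_of_commute (commute_egen_fij hib (Or.inl (lt_add_one i))) he
  simp only [fList, mul_smul (α := Uq F N), one_smul]
  exact egen_smul_fij_left_smul hi hai heb (kgen_smul_fij_smul hi hib hk)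

theorem egen_smul_fList_mem_succ_notMem (hi : 1 ≤ i ∧ i ≤ N) (hai : a < i) (hib : i + 1 < b)
    (he : egen F N i • w = 0) (hk : kgen F N i • w = qq F ^ n • w) :
    egen F N i • fList F N [a, i, b] • w =
      (qq F * vv F ^ n) • fij F N a i • fij F N (i + 1) b • w := by
  have hea : Commute (egen F N i) (fij F N a i) := commute_egen_fij hai (Or.inr le_rfl)
  simp only [fList, mul_smul (α := Uq F N), one_smul]
  rw [smul_smul_eq_smul_smul_of_commute hea, egen_smul_fij_right_smul hi hib he hk,
    smul_comm (fij F N a i)]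

theorem egen_smul_fSet_smul {l : List ℕ} {c : kk F} {u : M} (hL : IsGreatest (L : Set ℕ) a)
    (hR : IsLeast (R : Set ℕ) b) (hai : a ≤ i) (hl : (a :: (l ++ [b])).Pairwise (· < ·))
    (hS : ∀ x, x ∈ S ↔ x ∈ L ∨ x ∈ l ∨ x ∈ R)
    (h : egen F N i • fList F N (a :: (l ++ [b])) • fSet F N R • w = c • u) :
    egen F N i • fSet F N S • w = c • fSet F N L • u := by
  have heL : Commute (egen F N i) (fSet F N L) :=
    commute_egen_fSet_of_le fun x hx => (hL.2 hx).trans hai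
  rw [fSet_eq_mul_fList_mul hL hR hl hS, mul_smul, mul_smul,
    smul_smul_eq_smul_smul_of_commute heL, h, smul_comm]

end RaisingOperatorsOnProducts

theorem stmt10_general (F : Type) [Field F] (N : ℕ) (lam : ℕ → ℤ) (i : ℕ) (I : Finset ℕ)
    (hI : I ⊆ Finset.Icc 1 (N + 1)) (hlow : ∃ a ∈ I, a < i) (hhigh : ∃ b ∈ I, i + 1 < b)
    (hiI : i ∈ I) (hi1I : i + 1 ∈ I) {M : Type*} [AddCommGroup M] [Module (kk F) M]
    [Module (Uq F N) M] [IsScalarTower (kk F) (Uq F N) M] (w : M)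
    (hw : IsWeightVector F N lam w) (he : egen F N i • w = 0) :
    egen F N i •
      ((fSet F N I * HI F N I +
        fSet F N (I.erase i) * HI F N (I.erase i) +
        fSet F N (I.erase (i + 1)) * HI F N (I.erase (i + 1))) • w) = 0 := by
  obtain ⟨a, ha⟩ : ∃ a, IsGreatest (↑(I.filter (· < i)) : Set ℕ) a :=
    ⟨_, Finset.isGreatest_max' _ (Finset.filter_nonempty_iff.mpr hlow)⟩
  obtain ⟨b, hb⟩ : ∃ b, IsLeast (↑(I.filter (i + 1 < ·)) : Set ℕ) b :=
    ⟨_, Finset.isLeast_min' _ (Finset.filter_nonempty_iff.mpr hhigh)⟩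
  have hai := (Finset.mem_filter.mp ha.1).2
  have hib := (Finset.mem_filter.mp hb.1).2
  have hi : 1 ≤ i ∧ i ≤ N := ⟨by omega, by have := Finset.mem_Icc.mp (hI hi1I); omega⟩
  have hR : ∀ x ∈ I.filter (i + 1 < ·), i + 1 < x := fun x hx => (Finset.mem_filter.mp hx).2
  have heR := smul_smul_eq_zero_of_commute
    (commute_egen_fSet_of_gt fun x hx => Nat.lt_of_succ_lt (hR x hx)) he
  have hkR := kgen_smul_fSet_smul hi hR (hw i hi)
  have hI_smul := egen_smul_fSet_smul (S := I) (l := [i, i + 1]) ha hb hai.le (by simp; omega)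
    (by grind) (egen_smul_fList_mem_succ_mem hi hai hib heR hkR)
  have hplus_smul := egen_smul_fSet_smul (S := I.erase i) (l := [i + 1]) ha hb hai.le
    (by simp; omega) (by grind) (egen_smul_fList_notMem_succ_mem hi hai hib heR hkR)
  have hminus_smul := egen_smul_fSet_smul (S := I.erase (i + 1)) (l := [i]) ha hb hai.le
    (by simp; omega) (by grind) (egen_smul_fList_mem_succ_notMem hi hai hib heR hkR)
  simp only [add_smul, smul_add, hw.smul_mul_HI_smul, hI_smul, hplus_smul, hminus_smul]
  rw [HIval_erase lam hiI hi.1 (by omega), HIval_erase lam hi1I (by omega) (by omega),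
    Nat.add_sub_cancel, ← mul_smul (α := kk F), ← mul_smul (α := kk F), ← mul_smul (α := kk F),
    ← add_smul, ← add_smul]
  refine smul_eq_zero_of_left ?_ _
  linear_combination HIval F N lam I * qint_add_hval_eq_zero (F := F) lam hi.1

/-- for `1 < i < N`, `I ∈ S_i` and any weight `λ`:
`e_i (f_I H_I + f_{I⁺} H_{I⁺} + f_{I⁻} H_{I⁻}) v_λ = 0` in `M(λ)`. -/
theorem stmt10 (F : Type) [Field F] (N : ℕ) (lam : ℕ → ℤ) (i : ℕ)
    (h1 : 1 < i) (h2 : i < N) (I : Finset ℕ) (hI : I ∈ II N)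
    (hiI : i ∈ I) (hi1I : i + 1 ∈ I) :
    egen F N i •
      ((fSet F N I * HI F N I +
        fSet F N (I.erase i) * HI F N (I.erase i) +
        fSet F N (I.erase (i + 1)) * HI F N (I.erase (i + 1))) • hw F N lam) = 0 := by
  simp only [II, Finset.mem_filter, Finset.mem_powerset] at hI
  exact stmt10_general F N lam i I hI.1 ⟨1, hI.2.1, h1⟩ ⟨N + 1, hI.2.2, by omega⟩ hiI hi1I _
    (isWeightVector_hw lam) (egen_smul_hw lam ⟨h1.le, h2.le⟩)
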